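/- arXiv:1802.09692 — 2 statements merged into one kernel-verified Lean document; each statement's English description precedes it below -/
import Mathlib

section
/- Let $\chi, \rho$ be positive smooth functions on the standard $S^3$ with $P\rho = -\chi\rho^{-7}$, where $P = \Delta^2 + \frac{1}{2}\Delta - \frac{15}{16}$. Then for each coordinate function $x_i$ ($i = 1,2,3,4$), $\int_{S^3} \langle\nabla\chi, \nabla x_i\rangle\, \rho^{-6}\, d\mu = 0$. -/
open MeasureTheory Metric Set Real
open scoped RealInnerProductSpace

noncomputable section

/-- The ambient Euclidean space `ℝ⁴`. -/
abbrev E4 := EuclideanSpace ℝ (Fin 4)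

/-- The standard round sphere `S³ ⊂ ℝ⁴`. -/
def S3 : Set E4 := sphere (0 : E4) 1

/-- The standard (3-dimensional Hausdorff) measure on `S³`. -/
def muS : Measure E4 := μH[(3 : ℝ)].restrict S3

/-- Degree-zero homogeneous extension of a function on `S³` to `ℝ⁴ \ {0}`. -/
def ext0 (f : E4 → ℝ) : E4 → ℝ := fun x => f (‖x‖⁻¹ • x)

/-- The Laplace–Beltrami operator of the round `S³`, computed as the Euclidean Laplacian
of the degree-zero homogeneous extension (these agree on the sphere). -/
def sLap (f : E4 → ℝ) : E4 → ℝ := fun x =>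
  ∑ i : Fin 4, fderiv ℝ (fun y => fderiv ℝ (ext0 f) y (EuclideanSpace.single i 1)) x
    (EuclideanSpace.single i 1)

/-- The (tangential) gradient on `S³`, computed as the Euclidean gradient of the
degree-zero homogeneous extension. -/
def sGrad (f : E4 → ℝ) : E4 → E4 := fun x => gradient (ext0 f) x

/-- The Paneitz operator `P = Δ² + (1/2)Δ - 15/16` on the standard `S³`. -/
def Pan (f : E4 → ℝ) : E4 → ℝ := fun x =>
  sLap (sLap f) x + (1 / 2) * sLap f x - (15 / 16) * f x

/-- The Paneitz energy `E(φ) = ∫_{S³} [(Δφ)² - (1/2)|∇φ|² - (15/16)φ²] dμ`. -/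
def Efun (f : E4 → ℝ) : ℝ :=
  ∫ x, ((sLap f x) ^ 2 - (1 / 2) * ‖sGrad f x‖ ^ 2 - (15 / 16) * (f x) ^ 2) ∂muS

/-- Smoothness of a function on `S³` (smoothness of its homogeneous extension). -/
def SmoothS3 (f : E4 → ℝ) : Prop := ContDiffOn ℝ (⊤ : ℕ∞) (ext0 f) {0}ᶜ

/-- Membership surrogate for `H²(S³)`: the homogeneous extension is `C²` away from the
origin. -/
def H2S3 (f : E4 → ℝ) : Prop := ContDiffOn ℝ 2 (ext0 f) {0}ᶜ

/-- `‖φ⁻¹‖_{L⁶(S³)}²`. -/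
def invL6sq (f : E4 → ℝ) : ℝ := (∫ x, ((f x)⁻¹) ^ 6 ∂muS) ^ ((1 : ℝ) / 3)

theorem sum_D_coord {A : Type*} [CommRing A] [Algebra ℝ A] (D : Fin 4 → Derivation ℝ A A)
    (ξ : Fin 4 → A) (hDξ : ∀ i j, D i (ξ j) = (if i = j then 1 else 0) - ξ i * ξ j)
    (hξ : ∑ j, ξ j ^ 2 = 1) : ∑ j, D j (ξ j) = 3 := by
  simp only [hDξ, ← pow_two, if_true, Finset.sum_sub_distrib, hξ]
  simp
  norm_num

theorem sum_D_coord_mul_D {A : Type*} [CommRing A] [Algebra ℝ A] (D : Fin 4 → Derivation ℝ A A)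
    (ξ : Fin 4 → A) (hDξ : ∀ i j, D i (ξ j) = (if i = j then 1 else 0) - ξ i * ξ j)
    (hrad : ∀ f, ∑ j, ξ j * D j f = 0) (k : Fin 4) (f : A) :
    ∑ j, D j (ξ k) * D j f = D k f := by
  have h : ∑ j, ξ j * ξ k * D j f = 0 := by
    rw [← mul_zero (ξ k), ← hrad f, Finset.mul_sum]
    exact Finset.sum_congr rfl fun j _ => by ring
  simp [hDξ, sub_mul, h]

theorem sum_killing_coord_mul {A : Type*} [CommRing A] [Algebra ℝ A]
    (D : Fin 4 → Derivation ℝ A A) (ξ : Fin 4 → A)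
    (hDξ : ∀ i j, D i (ξ j) = (if i = j then 1 else 0) - ξ i * ξ j) (hξ : ∑ j, ξ j ^ 2 = 1)
    (hrad : ∀ f, ∑ j, ξ j * D j f = 0) (k : Fin 4) (f : A) :
    ∑ j, (ξ j * D k (ξ j * f) - ξ k * D j (ξ j * f)) = D k f - 3 * (ξ k * f) := by
  have hdiv := sum_D_coord D ξ hDξ hξ
  have htan : ∑ j, ξ j * D k (ξ j) = 0 := by
    have h : ∑ j, ξ j * (ξ k * ξ j) = ξ k := by
      have h1 := congrArg (ξ k * ·) hξ
      simp only [Finset.mul_sum, mul_one] at h1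
      exact (Finset.sum_congr rfl fun j _ => by ring).trans h1
    simp [hDξ, mul_sub, h]
  have key : ∀ j, ξ j * D k (ξ j * f) - ξ k * D j (ξ j * f) = ξ j ^ 2 * D k f
      + ξ j * D k (ξ j) * f - ξ k * f * D j (ξ j) - ξ k * (ξ j * D j f) := fun j => by
    simp only [Derivation.leibniz, smul_eq_mul]
    ring
  simp only [key, Finset.sum_add_distrib, Finset.sum_sub_distrib, ← Finset.sum_mul,
    ← Finset.mul_sum, hdiv, htan, hξ, hrad]
  ring

theorem lap_D_comm {A : Type*} [CommRing A] [Algebra ℝ A] (D : Fin 4 → Derivation ℝ A A)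
    (ξ : Fin 4 → A) (hDξ : ∀ i j, D i (ξ j) = (if i = j then 1 else 0) - ξ i * ξ j)
    (hξ : ∑ j, ξ j ^ 2 = 1)
    (hcomm : ∀ i j f, D i (D j f) = D j (D i f) + ξ i * D j f - ξ j * D i f)
    (hrad : ∀ f, ∑ j, ξ j * D j f = 0) (k : Fin 4) (f : A) :
    ∑ j, D j (D j (D k f)) = D k (∑ j, D j (D j f)) - 2 * ξ k * ∑ j, D j (D j f) + D k f := by
  have hdiv := sum_D_coord D ξ hDξ hξ
  have hmixed : ∑ j, ξ j * D k (D j f) = -D k f := by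
    have h := congrArg (D k) (hrad f)
    simp only [map_sum, Derivation.leibniz, smul_eq_mul, map_zero, hDξ, Finset.sum_add_distrib,
      mul_sub, Finset.sum_sub_distrib, mul_ite, mul_one, mul_zero, Finset.sum_ite_eq,
      Finset.mem_univ, if_true] at h
    have h2 : ∑ j, D j f * (ξ k * ξ j) = 0 := by
      rw [← mul_zero (ξ k), ← hrad f, Finset.mul_sum]
      exact Finset.sum_congr rfl fun j _ => by ring
    linear_combination h + h2
  have hgrad := sum_D_coord_mul_D D ξ hDξ hrad k f
  have key : ∀ j, D j (D j (D k f)) = D k (D j (D j f)) + ξ j * D k (D j f)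
      - 2 * ξ k * D j (D j f) + D j (ξ j) * D k f + ξ j * D j (D k f)
      - D j (ξ k) * D j f := fun j => by
    have h := congrArg (D j) (hcomm j k f)
    simp only [map_add, map_sub, Derivation.leibniz, smul_eq_mul] at h
    linear_combination h + hcomm j k (D j f)
  simp only [key, Finset.sum_add_distrib, Finset.sum_sub_distrib, ← Finset.sum_mul,
    ← Finset.mul_sum, hdiv, hmixed, hgrad, map_sum]
  rw [hrad (D k f)]
  ring

theorem lap_coord_mul {A : Type*} [CommRing A] [Algebra ℝ A] (D : Fin 4 → Derivation ℝ A A)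
    (ξ : Fin 4 → A) (hDξ : ∀ i j, D i (ξ j) = (if i = j then 1 else 0) - ξ i * ξ j)
    (hξ : ∑ j, ξ j ^ 2 = 1) (hrad : ∀ f, ∑ j, ξ j * D j f = 0) (k : Fin 4) (f : A) :
    ∑ j, D j (D j (ξ k * f)) = ξ k * ∑ j, D j (D j f) - 3 * ξ k * f + 2 * D k f := by
  have hdiv := sum_D_coord D ξ hDξ hξ
  have hgrad := sum_D_coord_mul_D D ξ hDξ hrad k f
  have hlap : ∑ j, D j (D j (ξ k)) = -3 * ξ k := by
    have h : ∀ j, D j (D j (ξ k)) = -(ξ j * D j (ξ k)) - ξ k * D j (ξ j) := fun j => by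
      rw [hDξ j k]
      simp only [map_sub, Derivation.leibniz, smul_eq_mul, hDξ j k]
      split_ifs <;> simp <;> ring
    simp only [h, Finset.sum_sub_distrib, Finset.sum_neg_distrib, hrad, ← Finset.mul_sum, hdiv]
    ring
  have key : ∀ j, D j (D j (ξ k * f)) = ξ k * D j (D j f) + D j (D j (ξ k)) * f
      + 2 * (D j (ξ k) * D j f) := fun j => by
    simp only [map_add, Derivation.leibniz, smul_eq_mul]
    ring
  simp only [key, Finset.sum_add_distrib, ← Finset.sum_mul, ← Finset.mul_sum, hlap, hgrad]
  ring

/-- The Kazdan–Warner argument for an abstract algebra of functions on the round `S³`. -/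
theorem kazdanWarner_algebra {A : Type*} [CommRing A] [Algebra ℝ A]
    (D : Fin 4 → Derivation ℝ A A) (ξ : Fin 4 → A) (I : A →ₗ[ℝ] ℝ)
    (hDξ : ∀ i j, D i (ξ j) = (if i = j then 1 else 0) - ξ i * ξ j)
    (hξ : ∑ j, ξ j ^ 2 = 1)
    (hcomm : ∀ i j f, D i (D j f) = D j (D i f) + ξ i * D j f - ξ j * D i f)
    (hrad : ∀ f, ∑ j, ξ j * D j f = 0)
    (hI : ∀ i f, I (D i f) = 3 * I (ξ i * f)) (k : Fin 4) (χ ρ σ : A) (hσ : ρ * σ = 1)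
    (hP : ∑ j, D j (D j (∑ i, D i (D i ρ))) + (1 / 2 : ℝ) • ∑ j, D j (D j ρ)
      - (15 / 16 : ℝ) • ρ = -(χ * σ ^ 7)) :
    I (D k χ * σ ^ 6) = 0 := by
  obtain ⟨Δ, hΔ⟩ : ∃ Δ : A →ₗ[ℝ] A, ∀ f, Δ f = ∑ j, D j (D j f) :=
    ⟨∑ j, (D j : A →ₗ[ℝ] A) ∘ₗ (D j : A →ₗ[ℝ] A), fun f => by simp⟩
  have hX : ∀ f, Δ (D k f) = D k (Δ f) - 2 * ξ k * Δ f + D k f := fun f => by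
    simp only [hΔ]; exact lap_D_comm D ξ hDξ hξ hcomm hrad k f
  have hx : ∀ f, Δ (ξ k * f) = ξ k * Δ f - 3 * ξ k * f + 2 * D k f := fun f => by
    simp only [hΔ]; exact lap_coord_mul D ξ hDξ hξ hrad k f
  have parts : ∀ i f g, I (f * D i g) = 3 * I (ξ i * (f * g)) - I (D i f * g) := fun i f g => by
    have h := hI i (f * g)
    rw [Derivation.leibniz, smul_eq_mul, smul_eq_mul, map_add, mul_comm g] at h
    linarith
  have symm : ∀ f g, I (f * Δ g) = I (Δ f * g) := fun f g => by
    have half : ∀ f g, I (f * Δ g) = -∑ j, I (D j f * D j g) := fun f g => by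
      have h0 : ∑ j, I (ξ j * (f * D j g)) = 0 := by
        rw [← map_sum, ← map_zero I, ← mul_zero f, ← hrad g, Finset.mul_sum]
        exact congrArg I (Finset.sum_congr rfl fun j _ => by ring)
      rw [hΔ, Finset.mul_sum, map_sum]
      simp only [parts, Finset.sum_sub_distrib, ← Finset.mul_sum, h0]
      ring
    rw [half, mul_comm, half]
    simp only [mul_comm]
  rw [← hΔ ρ, ← hΔ] at hP
  obtain ⟨P, hPd⟩ : ∃ P : A →ₗ[ℝ] A, ∀ f, P f = Δ (Δ f) + (1 / 2 : ℝ) • Δ f - (15 / 16 : ℝ) • f :=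
    ⟨Δ ∘ₗ Δ + (1 / 2 : ℝ) • Δ - (15 / 16 : ℝ) • LinearMap.id, fun f => by simp⟩
  have hsymmP : ∀ f g, I (f * P g) = I (P f * g) := fun f g => by
    simp only [hPd, mul_add, mul_sub, add_mul, sub_mul, mul_smul_comm, smul_mul_assoc, map_add,
      map_sub, map_smul, symm f, symm (Δ f)]
  have natCast_mul : ∀ (n : ℕ) (a : A), (n : A) * a = (n : ℝ) • a := fun n a => by
    rw [Algebra.smul_def, map_natCast]
  have two : ∀ a : A, 2 * a = (2 : ℝ) • a := fun a => by exact_mod_cast natCast_mul 2 a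
  have three : ∀ a : A, 3 * a = (3 : ℝ) • a := fun a => by exact_mod_cast natCast_mul 3 a
  simp only [mul_assoc] at hX hx
  simp only [two, three] at hX hx
  have hcov : ∀ f, P (D k f + (1 / 2 : ℝ) • (ξ k * f))
      = D k (P f) - (7 / 2 : ℝ) • (ξ k * P f) := fun f => by
    simp only [hPd, map_add, map_sub, map_smul, Derivation.map_smul, hX, hx, mul_add,
      mul_sub, mul_smul_comm]
    module
  have hu : I (P ρ * D k ρ) + (1 / 2) * I (ξ k * (P ρ * ρ)) = 0 := by
    have h := hsymmP ρ (D k ρ + (1 / 2 : ℝ) • (ξ k * ρ))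
    rw [hcov] at h
    simp only [mul_add, mul_sub, mul_smul_comm, map_add, map_sub, map_smul, smul_eq_mul, parts,
      mul_left_comm _ (ξ k)] at h
    have e1 : I (D k ρ * P ρ) = 3 * I (ξ k * (P ρ * ρ)) - I (D k (P ρ) * ρ) := by
      rw [mul_comm, parts]
    rw [parts]
    rw [e1, mul_comm ρ] at h
    linarith
  rw [hPd, hP] at hu
  have hDσ : D k (σ ^ 6) = -6 * σ ^ 7 * D k ρ := by
    have h1 := congrArg (D k) hσ
    rw [Derivation.leibniz, Derivation.map_one_eq_zero, smul_eq_mul, smul_eq_mul] at h1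
    rw [Derivation.leibniz_pow]
    simp only [smul_eq_mul, nsmul_eq_mul]
    push_cast
    linear_combination (6 * σ ^ 6) * h1 - (6 * σ ^ 5 * D k σ) * hσ
  have e := parts k χ (σ ^ 6)
  rw [hDσ] at e
  have s1 : I (χ * (-6 * σ ^ 7 * D k ρ)) = 6 * I (-(χ * σ ^ 7) * D k ρ) := by
    rw [← smul_eq_mul (6 : ℝ), ← map_smul]
    congr 1
    have six := natCast_mul 6 (-(χ * σ ^ 7) * D k ρ)
    push_cast at six
    linear_combination six
  have s2 : -(χ * σ ^ 7) * ρ = -(χ * σ ^ 6) := by linear_combination (-(χ * σ ^ 6)) * hσ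
  rw [s1] at e
  rw [s2, mul_neg, map_neg] at hu
  linarith

lemma measurableSet_S3 : MeasurableSet S3 := isClosed_sphere.measurableSet

lemma norm_coe_S3 (x : S3) : ‖(x : E4)‖ = 1 := mem_sphere_zero_iff_norm.1 x.2

lemma coe_S3_ne_zero (x : S3) : (x : E4) ≠ 0 :=
  norm_ne_zero_iff.1 (by rw [norm_coe_S3]; exact one_ne_zero)

lemma normalize_mem_S3 {x : E4} (hx : x ≠ 0) : ‖x‖⁻¹ • x ∈ S3 :=
  mem_sphere_zero_iff_norm.2 (by simpa using norm_smul_inv_norm (𝕜 := ℝ) hx)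

/-- Degree-zero homogeneous extension of a function defined on the sphere only. -/
def homExt (g : S3 → ℝ) : E4 → ℝ := ext0 (Function.extend Subtype.val g 0)

lemma homExt_of_ne_zero (g : S3 → ℝ) {x : E4} (hx : x ≠ 0) :
    homExt g x = g ⟨‖x‖⁻¹ • x, normalize_mem_S3 hx⟩ :=
  Subtype.val_injective.extend_apply g 0 ⟨‖x‖⁻¹ • x, normalize_mem_S3 hx⟩

lemma homExt_coe (g : S3 → ℝ) (x : S3) : homExt g x = g x := by
  rw [homExt_of_ne_zero g (coe_S3_ne_zero x)]
  congr 1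
  ext1
  simp [norm_coe_S3]

lemma homExt_smul (g : S3 → ℝ) {c : ℝ} (hc : 0 < c) (x : E4) : homExt g (c • x) = homExt g x := by
  rw [homExt, ext0, ext0, norm_smul, Real.norm_of_nonneg hc.le, smul_smul, mul_inv_rev,
    inv_mul_cancel_right₀ hc.ne']

lemma homExt_restrict (f : E4 → ℝ) {x : E4} (hx : x ≠ 0) :
    homExt (fun z : S3 => f z) x = ext0 f x :=
  homExt_of_ne_zero _ hx

lemma eventuallyEq_of_eq_of_ne_zero {β : Type*} {f g : E4 → β} (h : ∀ y, y ≠ 0 → f y = g y)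
    {x : E4} (hx : x ≠ 0) : f =ᶠ[nhds x] g :=
  Filter.eventuallyEq_of_mem (isOpen_compl_singleton.mem_nhds hx) fun y hy => h y hy

/-- The algebra of smooth functions on the sphere. -/
def smoothSphere : Subalgebra ℝ (S3 → ℝ) where
  carrier := {g | ContDiffOn ℝ (⊤ : ℕ∞) (homExt g) {0}ᶜ}
  mul_mem' {f g} hf hg := (hf.mul hg).congr fun x hx => by
    simp only [homExt_of_ne_zero _ hx, Pi.mul_apply]
  add_mem' {f g} hf hg := (hf.add hg).congr fun x hx => by
    simp only [homExt_of_ne_zero _ hx, Pi.add_apply]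
  algebraMap_mem' r := (contDiffOn_const (c := r)).congr fun x hx => by
    simp only [homExt_of_ne_zero _ hx, Pi.algebraMap_apply, Algebra.algebraMap_self_apply]

lemma contDiffAt_homExt (g : smoothSphere) {x : E4} (hx : x ≠ 0) :
    ContDiffAt ℝ (⊤ : ℕ∞) (homExt g) x :=
  g.2.contDiffAt (isOpen_compl_singleton.mem_nhds hx)

lemma differentiableAt_homExt (g : smoothSphere) {x : E4} (hx : x ≠ 0) :
    DifferentiableAt ℝ (homExt g) x :=
  (contDiffAt_homExt g hx).differentiableAt (by simp)

lemma fderiv_homExt_smul (g : S3 → ℝ) {c : ℝ} (hc : 0 < c) (x v : E4) :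
    c * fderiv ℝ (homExt g) (c • x) v = fderiv ℝ (homExt g) x v := by
  have h : (fun y => homExt g (c • y)) = homExt g := funext (homExt_smul g hc)
  have h2 := fderiv_comp_smul (𝕜 := ℝ) (f := homExt g) (x := x) c
  rw [h] at h2
  rw [h2]
  rfl

lemma fderiv_homExt_self (g : smoothSphere) {x : E4} (hx : x ≠ 0) :
    fderiv ℝ (homExt g) x x = 0 := by
  have h1 : HasDerivAt (fun t : ℝ => x + t • x) x 0 := by
    simpa using ((hasDerivAt_id (0 : ℝ)).smul_const x).const_add x
  have h2 : HasDerivAt (fun t : ℝ => homExt g (x + t • x)) (fderiv ℝ (homExt g) x x) 0 :=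
    HasFDerivAt.comp_hasDerivAt (0 : ℝ)
      (by rw [zero_smul, add_zero]; exact (differentiableAt_homExt g hx).hasFDerivAt) h1
  have h3 : (fun t : ℝ => homExt g (x + t • x)) =ᶠ[nhds 0] fun _ => homExt g x := by
    filter_upwards [lt_mem_nhds (show (-1 : ℝ) < 0 by norm_num)] with t ht
    rw [← homExt_smul g (show 0 < 1 + t by linarith) x, add_smul, one_smul]
  exact h2.unique ((hasDerivAt_const (0 : ℝ) _).congr_of_eventuallyEq h3)

/-- The tangential part of the `k`-th partial derivative. -/
def tangentialDeriv (k : Fin 4) (g : S3 → ℝ) (x : S3) : ℝ :=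
  fderiv ℝ (homExt g) x (EuclideanSpace.single k 1)

lemma homExt_tangentialDeriv (k : Fin 4) (g : S3 → ℝ) {x : E4} (hx : x ≠ 0) :
    homExt (tangentialDeriv k g) x
      = ‖x‖ * fderiv ℝ (homExt g) x (EuclideanSpace.single k 1) := by
  have hpos := norm_pos_iff.2 hx
  rw [homExt_of_ne_zero _ hx, tangentialDeriv,
    ← fderiv_homExt_smul g (inv_pos.2 hpos) x, mul_inv_cancel_left₀ hpos.ne']

lemma contDiffOn_fderiv_homExt (g : smoothSphere) (v : E4) :
    ContDiffOn ℝ (⊤ : ℕ∞) (fun x => fderiv ℝ (homExt g) x v) {0}ᶜ :=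
  (g.2.fderiv_of_isOpen isOpen_compl_singleton (by simp)).clm_apply contDiffOn_const

lemma tangentialDeriv_mem (k : Fin 4) (g : smoothSphere) :
    tangentialDeriv k g ∈ smoothSphere :=
  ContDiffOn.congr (((contDiffOn_id).norm ℝ fun _ hx => hx).mul (contDiffOn_fderiv_homExt g _))
    fun _ hx => homExt_tangentialDeriv k g hx

/-- The components of the tangential gradient, as derivations of the algebra of smooth functions. -/
def sphereDerivation (k : Fin 4) : Derivation ℝ smoothSphere smoothSphere :=
  Derivation.mk'
    { toFun := fun g => ⟨tangentialDeriv k g, tangentialDeriv_mem k g⟩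
      map_add' := fun f g => by
        ext x
        have hx := coe_S3_ne_zero x
        have h : homExt ((f + g : smoothSphere) : S3 → ℝ) =ᶠ[nhds (x : E4)] homExt f + homExt g :=
          eventuallyEq_of_eq_of_ne_zero (fun y hy => by
            simp [homExt_of_ne_zero _ hy]) hx
        simp only [tangentialDeriv, h.fderiv_eq]
        rw [fderiv_add (differentiableAt_homExt f hx) (differentiableAt_homExt g hx)]
        rfl
      map_smul' := fun c f => by
        ext x
        have hx := coe_S3_ne_zero x
        have h : homExt ((c • f : smoothSphere) : S3 → ℝ) =ᶠ[nhds (x : E4)] c • homExt f :=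
          eventuallyEq_of_eq_of_ne_zero (fun y hy => by
            simp [homExt_of_ne_zero _ hy]) hx
        simp only [tangentialDeriv, h.fderiv_eq]
        rw [fderiv_const_smul (differentiableAt_homExt f hx)]
        rfl }
    fun f g => by
      ext x
      have hx := coe_S3_ne_zero x
      have h : homExt ((f * g : smoothSphere) : S3 → ℝ) =ᶠ[nhds (x : E4)] homExt f * homExt g :=
        eventuallyEq_of_eq_of_ne_zero (fun y hy => by
          simp [homExt_of_ne_zero _ hy]) hx
      simp only [tangentialDeriv, LinearMap.coe_mk, AddHom.coe_mk, h.fderiv_eq]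
      rw [fderiv_mul (differentiableAt_homExt f hx) (differentiableAt_homExt g hx)]
      simp [tangentialDeriv, homExt_coe]

lemma sphereDerivation_apply (k : Fin 4) (g : smoothSphere) (x : S3) :
    (sphereDerivation k g : S3 → ℝ) x
      = fderiv ℝ (homExt g) x (EuclideanSpace.single k 1) := rfl

lemma hasFDerivAt_norm_S3 (x : S3) : HasFDerivAt (fun y : E4 => ‖y‖) (innerSL ℝ (x : E4)) x := by
  have h := (hasStrictFDerivAt_norm_sq (x : E4)).hasFDerivAt.sqrt
    (by simp [norm_coe_S3])
  simp only [Real.sqrt_sq (norm_nonneg _), norm_coe_S3] at h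
  rwa [← Nat.cast_smul_eq_nsmul ℝ 2, smul_smul, one_pow, Real.sqrt_one, mul_one, Nat.cast_ofNat,
    one_div_mul_cancel two_ne_zero, one_smul] at h

lemma inner_single_one (x : E4) (i : Fin 4) : ⟪x, EuclideanSpace.single i 1⟫ = x i := by
  rw [EuclideanSpace.inner_single_right]
  simp

lemma fderiv_homExt_sphereDerivation (j : Fin 4) (g : smoothSphere) (x : S3) (v : E4) :
    fderiv ℝ (homExt (sphereDerivation j g)) x v
      = ⟪(x : E4), v⟫ * (sphereDerivation j g : S3 → ℝ) x
        + fderiv ℝ (fun y => fderiv ℝ (homExt g) y (EuclideanSpace.single j 1)) x v := by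
  have hx := coe_S3_ne_zero x
  have h : homExt (sphereDerivation j g) =ᶠ[nhds (x : E4)]
      fun y => ‖y‖ * fderiv ℝ (homExt g) y (EuclideanSpace.single j 1) :=
    eventuallyEq_of_eq_of_ne_zero (fun y hy => homExt_tangentialDeriv j g hy) hx
  have h2 : DifferentiableAt ℝ
      (fun y => fderiv ℝ (homExt g) y (EuclideanSpace.single j 1)) x :=
    ((contDiffOn_fderiv_homExt g _).contDiffAt
      (isOpen_compl_singleton.mem_nhds hx)).differentiableAt (by simp)
  have h3 := ((hasFDerivAt_norm_S3 x).mul h2.hasFDerivAt).fderiv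
  rw [h.fderiv_eq, sphereDerivation_apply]
  refine (congrArg (fun L : E4 →L[ℝ] ℝ => L v) h3).trans ?_
  simp [norm_coe_S3]
  ring

/-- The coordinate functions, as elements of the algebra of smooth functions. -/
def sphereCoord (k : Fin 4) : smoothSphere :=
  ⟨fun x => (x : E4) k, by
    have hn : ContDiffOn ℝ (⊤ : ℕ∞) (fun y : E4 => ‖y‖) {0}ᶜ := contDiffOn_id.norm ℝ fun _ hx => hx
    have h : ContDiffOn ℝ (⊤ : ℕ∞) (fun y : E4 => ‖y‖⁻¹ * y k) ({0}ᶜ : Set E4) :=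
      (hn.inv fun _ hx => norm_ne_zero_iff.2 hx).mul
        (EuclideanSpace.proj (𝕜 := ℝ) k : E4 →L[ℝ] ℝ).contDiff.contDiffOn
    exact h.congr fun y hy => by simp [homExt_of_ne_zero _ hy]⟩

lemma sphereCoord_apply (k : Fin 4) (x : S3) : (sphereCoord k : S3 → ℝ) x = (x : E4) k := rfl

lemma sum_sphereCoord_sq : ∑ j, sphereCoord j ^ 2 = 1 := by
  ext x
  have h := EuclideanSpace.real_norm_sq_eq (x : E4)
  rw [norm_coe_S3] at h
  simpa [sphereCoord_apply] using h.symm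

lemma sphereDerivation_coord (i j : Fin 4) :
    sphereDerivation i (sphereCoord j)
      = (if i = j then 1 else 0) - sphereCoord i * sphereCoord j := by
  ext x
  have hx := coe_S3_ne_zero x
  have h : homExt (sphereCoord j) =ᶠ[nhds (x : E4)] fun y => ‖y‖⁻¹ * y j :=
    eventuallyEq_of_eq_of_ne_zero (fun y hy => by
      simp [homExt_of_ne_zero _ hy, sphereCoord_apply]) hx
  have h1 := (hasDerivAt_inv (norm_ne_zero_iff.2 hx)).comp_hasFDerivAt (x : E4)
    (hasFDerivAt_norm_S3 x)
  have h2 := h1.mul (EuclideanSpace.proj (𝕜 := ℝ) j : E4 →L[ℝ] ℝ).hasFDerivAt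
  have h3 : HasFDerivAt (fun y : E4 => ‖y‖⁻¹ * y j) _ (x : E4) := h2
  rw [sphereDerivation_apply, h.fderiv_eq, h3.fderiv]
  by_cases hij : i = j
  · subst hij
    simp [norm_coe_S3, sphereCoord_apply, inner_single_one, sub_eq_add_neg]
  · simp [norm_coe_S3, sphereCoord_apply, inner_single_one, hij, Ne.symm hij]
    ring

lemma sum_coord_mul_fderiv (L : E4 →L[ℝ] ℝ) (v : E4) :
    ∑ j, v j * L (EuclideanSpace.single j 1) = L v := by
  conv_rhs => rw [← (EuclideanSpace.basisFun (Fin 4) ℝ).sum_repr v]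
  simp

lemma sum_coord_mul_sphereDerivation (g : smoothSphere) :
    ∑ j, sphereCoord j * sphereDerivation j g = 0 := by
  ext x
  simpa [sphereCoord_apply, sphereDerivation_apply, sum_coord_mul_fderiv] using
    fderiv_homExt_self g (coe_S3_ne_zero x)

lemma fderiv_fderiv_apply {f : E4 → ℝ} {x : E4} (hf : ContDiffAt ℝ (⊤ : ℕ∞) f x) (v w : E4) :
    fderiv ℝ (fun y => fderiv ℝ f y v) x w = fderiv ℝ (fderiv ℝ f) x w v := by
  have h : DifferentiableAt ℝ (fderiv ℝ f) x :=
    (hf.fderiv_right (m := 1) (WithTop.coe_le_coe.2 (le_top : (1 + 1 : ℕ∞) ≤ ⊤))).differentiableAt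
      (by simp)
  rw [fderiv_clm_apply h (differentiableAt_const v)]
  simp

lemma sphereDerivation_comm (i j : Fin 4) (g : smoothSphere) :
    sphereDerivation i (sphereDerivation j g) = sphereDerivation j (sphereDerivation i g)
      + sphereCoord i * sphereDerivation j g - sphereCoord j * sphereDerivation i g := by
  ext x
  have hg := contDiffAt_homExt g (coe_S3_ne_zero x)
  have hsymm := hg.isSymmSndFDerivAt (by simpa using WithTop.coe_le_coe.2 (le_top : (2 : ℕ∞) ≤ ⊤))
    (EuclideanSpace.single i 1) (EuclideanSpace.single j 1)
  simp only [sphereDerivation_apply _ (sphereDerivation _ g), fderiv_homExt_sphereDerivation,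
    fderiv_fderiv_apply hg, hsymm, AddSubgroupClass.coe_sub, Subalgebra.coe_add,
    Subalgebra.coe_mul, Pi.sub_apply, Pi.add_apply, Pi.mul_apply, sphereCoord_apply,
    inner_single_one]
  ring

/-- The central projection to the sphere of the affine hyperplane on which the `i`-th coordinate
equals `s`. -/
def centralProj (i : Fin 4) (s : ℝ) (v : Fin 3 → ℝ) : E4 :=
  ‖WithLp.toLp 2 (i.insertNth s v : Fin 4 → ℝ)‖⁻¹ • WithLp.toLp 2 (i.insertNth s v : Fin 4 → ℝ)

lemma contDiff_centralProj (i : Fin 4) {s : ℝ} (hs : s ≠ 0) : ContDiff ℝ 1 (centralProj i s) := by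
  have h : ContDiff ℝ 1
      (fun v : Fin 3 → ℝ => (WithLp.toLp 2 (i.insertNth s v : Fin 4 → ℝ) : E4)) := by
    rw [contDiff_euclidean]
    intro j
    refine i.succAboveCases ?_ (fun k => ?_) j
    · simpa using contDiff_const
    · simpa using contDiff_apply ℝ ℝ k
  have hne : ∀ v : Fin 3 → ℝ, (WithLp.toLp 2 (i.insertNth s v : Fin 4 → ℝ) : E4) ≠ 0 := by
    intro v hv
    have := congrArg (fun w : E4 => w i) hv
    simp [hs] at this
  exact ((h.norm ℝ hne).inv fun v => norm_ne_zero_iff.2 (hne v)).smul h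

lemma hausdorffMeasure_centralProj_lt_top (i : Fin 4) {s : ℝ} (hs : s ≠ 0) :
    μH[(3 : ℝ)] (centralProj i s '' Icc (-1) 1) < ⊤ := by
  obtain ⟨K, hK⟩ := (contDiff_centralProj i hs).contDiffOn.exists_lipschitzOnWith one_ne_zero
    (convex_Icc (-1 : Fin 3 → ℝ) 1) isCompact_Icc
  refine (hK.hausdorffMeasure_image_le (by norm_num)).trans_lt ?_
  have h : (μH[(3 : ℝ)] : Measure (Fin 3 → ℝ)) = volume := by
    simpa using hausdorffMeasure_pi_real (ι := Fin 3)
  rw [h]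
  exact ENNReal.mul_lt_top (by simp) isCompact_Icc.measure_lt_top

lemma S3_subset_iUnion_centralProj :
    S3 ⊆ ⋃ i : Fin 4, (centralProj i 1 '' Icc (-1) 1 ∪ centralProj i (-1) '' Icc (-1) 1) := by
  intro x hx
  have hn : ‖x‖ = 1 := norm_coe_S3 ⟨x, hx⟩
  obtain ⟨i, hi⟩ := Finite.exists_max fun j => |x j|
  have hpos : 0 < |x i| := by
    refine (abs_nonneg _).lt_of_ne' fun h0 => coe_S3_ne_zero ⟨x, hx⟩ ?_
    ext j
    exact abs_nonpos_iff.1 ((hi j).trans h0.le)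
  have hmem : (fun k => |x i|⁻¹ * x (i.succAbove k)) ∈ Icc (-1 : Fin 3 → ℝ) 1 := by
    have hk : ∀ k, |(|x i|⁻¹ * x (i.succAbove k))| ≤ 1 := fun k => by
      rw [abs_mul, abs_inv, abs_abs, inv_mul_le_one₀ hpos]
      exact hi _
    exact ⟨fun k => (abs_le.1 (hk k)).1, fun k => (abs_le.1 (hk k)).2⟩
  have hproj : centralProj i (|x i|⁻¹ * x i) (fun k => |x i|⁻¹ * x (i.succAbove k)) = x := by
    have h : (WithLp.toLp 2 (i.insertNth (|x i|⁻¹ * x i) fun k => |x i|⁻¹ * x (i.succAbove k)) : E4)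
        = |x i|⁻¹ • x := by
      ext j
      refine i.succAboveCases ?_ (fun k => ?_) j <;> simp
    rw [centralProj, h, norm_smul, hn, smul_smul]
    simp [hpos.ne']
  rw [mem_iUnion]
  refine ⟨i, ?_⟩
  rcases (abs_pos.1 hpos).lt_or_gt with h | h
  · rw [abs_of_neg h, inv_neg, neg_mul, inv_mul_cancel₀ h.ne] at hproj
    rw [abs_of_neg h, inv_neg] at hmem
    exact Or.inr ⟨_, hmem, hproj⟩
  · rw [abs_of_pos h, inv_mul_cancel₀ h.ne'] at hproj
    rw [abs_of_pos h] at hmem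
    exact Or.inl ⟨_, hmem, hproj⟩

instance isFiniteMeasure_muS : IsFiniteMeasure muS := by
  refine ⟨?_⟩
  rw [muS, Measure.restrict_apply_univ]
  refine (measure_mono S3_subset_iUnion_centralProj).trans_lt
    ((measure_iUnion_le _).trans_lt ?_)
  rw [tsum_fintype]
  refine ENNReal.sum_lt_top.2 fun i _ => (measure_union_le _ _).trans_lt
    (ENNReal.add_lt_top.2 ⟨hausdorffMeasure_centralProj_lt_top i one_ne_zero,
      hausdorffMeasure_centralProj_lt_top i (by norm_num)⟩)

/-- The rotation by the angle `θ` in the plane spanned by two coordinate axes. -/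
def planeRotation {i j : Fin 4} (hij : i ≠ j) (θ : ℝ) : E4 →ₗᵢ[ℝ] E4 where
  toFun x := x + (((cos θ - 1) * x i - sin θ * x j) • EuclideanSpace.single i (1 : ℝ)
    + (sin θ * x i + (cos θ - 1) * x j) • EuclideanSpace.single j (1 : ℝ))
  map_add' x y := by
    simp only [PiLp.add_apply]
    module
  map_smul' c x := by
    simp only [PiLp.smul_apply, smul_eq_mul, RingHom.id_apply]
    module
  norm_map' x := by
    have h0 : ⟪EuclideanSpace.single i (1 : ℝ), (EuclideanSpace.single j 1 : E4)⟫ = 0 := by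
      rw [inner_single_one]
      simp [hij.symm]
    have h : ‖x + (((cos θ - 1) * x i - sin θ * x j) • (EuclideanSpace.single i 1 : E4)
        + (sin θ * x i + (cos θ - 1) * x j) • (EuclideanSpace.single j 1 : E4))‖ ^ 2
        = ‖x‖ ^ 2 := by
      rw [norm_add_sq_real, norm_add_sq_real]
      simp only [inner_add_right, real_inner_smul_right, real_inner_smul_left, inner_single_one,
        norm_smul, mul_pow, Real.norm_eq_abs, sq_abs]
      simp [hij.symm]
      linear_combination (x i ^ 2 + x j ^ 2) * sin_sq_add_cos_sq θ
    exact (sq_eq_sq₀ (norm_nonneg _) (norm_nonneg _)).1 h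

lemma planeRotation_apply {i j : Fin 4} (hij : i ≠ j) (θ : ℝ) (x : E4) :
    planeRotation hij θ x = x + (((cos θ - 1) * x i - sin θ * x j) • EuclideanSpace.single i (1 : ℝ)
      + (sin θ * x i + (cos θ - 1) * x j) • EuclideanSpace.single j (1 : ℝ)) := rfl

lemma hasDerivAt_planeRotation {i j : Fin 4} (hij : i ≠ j) (θ : ℝ) (x : E4) :
    HasDerivAt (fun t => planeRotation hij t x)
      (planeRotation hij θ x i • EuclideanSpace.single j (1 : ℝ)
        - planeRotation hij θ x j • EuclideanSpace.single i (1 : ℝ)) θ := by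
  have hc := (hasDerivAt_cos θ).sub_const 1
  have hs := hasDerivAt_sin θ
  have h := ((((hc.mul_const (x i)).sub (hs.mul_const (x j))).smul_const
    (EuclideanSpace.single i (1 : ℝ) : E4)).add
    (((hs.mul_const (x i)).add (hc.mul_const (x j))).smul_const
    (EuclideanSpace.single j (1 : ℝ) : E4))).const_add x
  refine h.congr_deriv ?_
  simp only [planeRotation_apply, PiLp.add_apply, PiLp.smul_apply, PiLp.single_apply, hij,
    hij.symm, if_true, if_false, smul_eq_mul]
  module

lemma planeRotation_zero {i j : Fin 4} (hij : i ≠ j) (x : E4) : planeRotation hij 0 x = x := by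
  simp [planeRotation_apply]

lemma integral_muS_comp_isometry (R : E4 →ₗᵢ[ℝ] E4) (f : E4 → ℝ) :
    ∫ x, f (R x) ∂muS = ∫ x, f x ∂muS := by
  let e : E4 ≃ₗᵢ[ℝ] E4 := R.toLinearIsometryEquiv rfl
  have h1 := e.toIsometryEquiv.measurePreserving_hausdorffMeasure 3
  have h2 := h1.restrict_preimage measurableSet_S3
  have h3 : e.toIsometryEquiv ⁻¹' S3 = S3 := by
    ext x
    change R x ∈ S3 ↔ x ∈ S3
    simp [S3]
  rw [h3] at h2
  exact h2.integral_comp e.toHomeomorph.measurableEmbedding f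

lemma ae_muS_mem : ∀ᵐ x ∂muS, x ∈ S3 := ae_restrict_mem measurableSet_S3

lemma continuousOn_homExt (g : smoothSphere) : ContinuousOn (homExt g) S3 :=
  g.2.continuousOn.mono fun x hx => coe_S3_ne_zero ⟨x, hx⟩

lemma integrable_homExt (g : smoothSphere) : Integrable (homExt g) muS := by
  obtain ⟨C, hC⟩ := (isCompact_sphere (0 : E4) 1).exists_bound_of_continuousOn
    (continuousOn_homExt g)
  exact Integrable.of_bound ((continuousOn_homExt g).aestronglyMeasurable measurableSet_S3) C
    (ae_muS_mem.mono hC)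

/-- Integration over the sphere, as a linear functional. -/
def sphereIntegral : smoothSphere →ₗ[ℝ] ℝ where
  toFun g := ∫ x, homExt g x ∂muS
  map_add' f g := by
    rw [← integral_add (integrable_homExt f) (integrable_homExt g)]
    refine integral_congr_ae (ae_muS_mem.mono fun x hx => ?_)
    simp [homExt_of_ne_zero _ (coe_S3_ne_zero ⟨x, hx⟩)]
  map_smul' c f := by
    rw [RingHom.id_apply, ← integral_smul]
    refine integral_congr_ae (ae_muS_mem.mono fun x hx => ?_)
    simp [homExt_of_ne_zero _ (coe_S3_ne_zero ⟨x, hx⟩)]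

lemma sphereIntegral_apply (g : smoothSphere) : sphereIntegral g = ∫ x, homExt g x ∂muS := rfl

lemma sphereIntegral_killing (i j : Fin 4) (g : smoothSphere) :
    sphereIntegral (sphereCoord i * sphereDerivation j g - sphereCoord j * sphereDerivation i g)
      = 0 := by
  rcases eq_or_ne i j with rfl | hij
  · simp
  set Lg := sphereCoord i * sphereDerivation j g - sphereCoord j * sphereDerivation i g with hLg
  obtain ⟨C, hC⟩ := (isCompact_sphere (0 : E4) 1).exists_bound_of_continuousOn
    (continuousOn_homExt Lg)
  have hmem : ∀ θ, ∀ x ∈ S3, planeRotation hij θ x ∈ S3 := fun θ x hx => by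
    simpa [S3] using hx
  have hLg_apply : ∀ y ∈ S3, homExt Lg y = fderiv ℝ (homExt g) y
      (y i • EuclideanSpace.single j (1 : ℝ) - y j • EuclideanSpace.single i (1 : ℝ)) := by
    intro y hy
    rw [homExt_coe Lg ⟨y, hy⟩, map_sub, map_smul, map_smul]
    rfl
  have hcont : ∀ (f : smoothSphere) (θ : ℝ),
      AEStronglyMeasurable (fun x => homExt f (planeRotation hij θ x)) muS := fun f θ =>
    ((continuousOn_homExt f).comp (planeRotation hij θ).continuous.continuousOn
      (hmem θ)).aestronglyMeasurable measurableSet_S3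
  have hderiv := (hasDerivAt_integral_of_dominated_loc_of_deriv_le (μ := muS) (x₀ := (0 : ℝ))
    (F := fun θ x => homExt g (planeRotation hij θ x))
    (F' := fun θ x => homExt Lg (planeRotation hij θ x)) (bound := fun _ => C) Filter.univ_mem
    (Filter.Eventually.of_forall (hcont g))
    (by simpa only [planeRotation_zero] using integrable_homExt g) (hcont Lg 0)
    (ae_muS_mem.mono fun x hx θ _ => hC _ (hmem θ x hx)) (integrable_const C)
    (ae_muS_mem.mono fun x hx θ _ => by
      have hy := hmem θ x hx
      rw [hLg_apply _ hy]
      exact (differentiableAt_homExt g (coe_S3_ne_zero ⟨_, hy⟩)).hasFDerivAt.comp_hasDerivAt θ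
        (hasDerivAt_planeRotation hij θ x))).2
  simp only [integral_muS_comp_isometry, planeRotation_zero] at hderiv
  exact hderiv.unique (hasDerivAt_const _ _)

lemma sphereIntegral_sphereDerivation (k : Fin 4) (g : smoothSphere) :
    sphereIntegral (sphereDerivation k g) = 3 * sphereIntegral (sphereCoord k * g) := by
  have h : ∑ j, (sphereCoord j * sphereDerivation k (sphereCoord j * g)
      - sphereCoord k * sphereDerivation j (sphereCoord j * g))
      = sphereDerivation k g - (3 : ℝ) • (sphereCoord k * g) := by
    rw [sum_killing_coord_mul sphereDerivation sphereCoord sphereDerivation_coord sum_sphereCoord_sq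
      sum_coord_mul_sphereDerivation, Algebra.smul_def, map_ofNat]
  have h2 := congrArg sphereIntegral h
  rw [map_sum, Finset.sum_eq_zero fun j _ => sphereIntegral_killing j k _, map_sub, map_smul,
    smul_eq_mul] at h2
  linarith

lemma homExt_eq_ext0 {f : E4 → ℝ} {g : S3 → ℝ} (hfg : ∀ x : S3, f x = g x) {y : E4} (hy : y ≠ 0) :
    ext0 f y = homExt g y := by
  rw [← funext hfg, homExt_restrict f hy]

lemma sLap_eq {f : E4 → ℝ} {g : smoothSphere} (hfg : ∀ x : S3, f x = (g : S3 → ℝ) x) (x : S3) :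
    sLap f x
      = ((∑ j, sphereDerivation j (sphereDerivation j g) : smoothSphere) : S3 → ℝ) x := by
  have hx := coe_S3_ne_zero x
  have h : ∀ y : E4, y ≠ 0 → ext0 f =ᶠ[nhds y] homExt g := fun y hy =>
    eventuallyEq_of_eq_of_ne_zero (fun z hz => homExt_eq_ext0 hfg hz) hy
  have hrad := congrFun (congrArg Subtype.val (sum_coord_mul_sphereDerivation g)) x
  simp only [AddSubmonoidClass.coe_finsetSum, Subalgebra.coe_mul, Finset.sum_apply, Pi.mul_apply,
    sphereCoord_apply] at hrad
  simp only [AddSubmonoidClass.coe_finsetSum, Finset.sum_apply,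
    sphereDerivation_apply _ (sphereDerivation _ g), fderiv_homExt_sphereDerivation,
    inner_single_one, Finset.sum_add_distrib]
  rw [hrad, ZeroMemClass.coe_zero, Pi.zero_apply, zero_add, sLap]
  refine Finset.sum_congr rfl fun j _ => ?_
  have h2 : (fun y => fderiv ℝ (ext0 f) y (EuclideanSpace.single j 1)) =ᶠ[nhds (x : E4)]
      fun y => fderiv ℝ (homExt g) y (EuclideanSpace.single j 1) :=
    eventuallyEq_of_eq_of_ne_zero (fun y hy => by rw [(h y hy).fderiv_eq]) hx
  rw [h2.fderiv_eq]

lemma Pan_eq {f : E4 → ℝ} {g : smoothSphere} (hfg : ∀ x : S3, f x = (g : S3 → ℝ) x) (x : S3) :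
    Pan f x = ((∑ j, sphereDerivation j (sphereDerivation j
        (∑ i, sphereDerivation i (sphereDerivation i g)))
      + (1 / 2 : ℝ) • ∑ j, sphereDerivation j (sphereDerivation j g)
      - (15 / 16 : ℝ) • g : smoothSphere) : S3 → ℝ) x := by
  rw [Pan, sLap_eq (sLap_eq hfg), sLap_eq hfg, hfg]
  rfl

lemma inner_sGrad_eq {f : E4 → ℝ} {g : smoothSphere} (hfg : ∀ x : S3, f x = (g : S3 → ℝ) x)
    (k : Fin 4) (x : S3) :
    ⟪sGrad f x, sGrad (fun y => y k) x⟫ = (sphereDerivation k g : S3 → ℝ) x := by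
  have hx := coe_S3_ne_zero x
  have grad : ∀ {f : E4 → ℝ} {g : smoothSphere} (_ : ∀ x : S3, f x = (g : S3 → ℝ) x) (v : E4),
      ⟪sGrad f x, v⟫ = fderiv ℝ (homExt g) x v := fun {f g} hfg v => by
    rw [sGrad, gradient, InnerProductSpace.toDual_symm_apply, (eventuallyEq_of_eq_of_ne_zero
      (fun z hz => homExt_eq_ext0 hfg hz) hx).fderiv_eq]
  have h := sum_D_coord_mul_D sphereDerivation sphereCoord sphereDerivation_coord
    sum_coord_mul_sphereDerivation k g
  rw [← h, grad hfg, ← sum_coord_mul_fderiv]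
  simp only [AddSubmonoidClass.coe_finsetSum, Subalgebra.coe_mul, Finset.sum_apply, Pi.mul_apply,
    sphereDerivation_apply]
  refine Finset.sum_congr rfl fun j _ => ?_
  rw [← inner_single_one, grad (g := sphereCoord k) fun _ => rfl]

/-- The restriction to the sphere of a smooth function. -/
def SmoothS3.restrict {f : E4 → ℝ} (hf : SmoothS3 f) : smoothSphere :=
  ⟨fun x => f x, hf.congr fun _ hx => homExt_restrict f hx⟩

lemma SmoothS3.inv {f : E4 → ℝ} (hf : SmoothS3 f) (hpos : ∀ x ∈ S3, 0 < f x) :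
    SmoothS3 fun x => (f x)⁻¹ :=
  ContDiffOn.inv hf fun _ hx => (hpos _ (normalize_mem_S3 hx)).ne'

/-- Kazdan–Warner identity on `S³` for the coordinate functions: if `χ, ρ` are positive
smooth with `Pρ = -χρ⁻⁷`, then `∫_{S³} ⟨∇χ, ∇xᵢ⟩ ρ⁻⁶ dμ = 0` for `i = 1,2,3,4`. -/
theorem stmt_17 (χ ρ : E4 → ℝ) (hχ : SmoothS3 χ) (hρ : SmoothS3 ρ)
    (hχpos : ∀ x ∈ S3, 0 < χ x) (hρpos : ∀ x ∈ S3, 0 < ρ x)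
    (heq : ∀ x ∈ S3, Pan ρ x = -(χ x * ((ρ x)⁻¹) ^ 7)) :
    ∀ i : Fin 4,
      ∫ x, ⟪sGrad χ x, sGrad (fun y => y i) x⟫ * ((ρ x)⁻¹) ^ 6 ∂muS = 0 := by
  intro k
  have key := kazdanWarner_algebra sphereDerivation sphereCoord sphereIntegral
    sphereDerivation_coord sum_sphereCoord_sq sphereDerivation_comm sum_coord_mul_sphereDerivation
    sphereIntegral_sphereDerivation k hχ.restrict hρ.restrict (hρ.inv hρpos).restrict
    (Subtype.ext (funext fun x => mul_inv_cancel₀ (hρpos x x.2).ne'))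
    (Subtype.ext (funext fun x => (Pan_eq (g := hρ.restrict) (fun _ => rfl) x).symm.trans
      (heq x x.2)))
  rw [← key, sphereIntegral_apply]
  refine integral_congr_ae (ae_muS_mem.mono fun x hx => ?_)
  rw [homExt_coe _ ⟨x, hx⟩]
  exact congrArg (· * ((ρ x)⁻¹) ^ 6) (inner_sGrad_eq (g := hχ.restrict) (fun _ => rfl) k ⟨x, hx⟩)
end
end

section
/- Let $u$ be a positive smooth function on the standard $S^3$ that is radial symmetric and decreasing with respect to the north pole $N = (0,0,0,1)$ and satisfies $Pu + \varepsilon u = -s_\varepsilon u^{-7}$ for some constants $\varepsilon, s_\varepsilon > 0$, where $P = \Delta^2 + \frac{1}{2}\Delta - \frac{15}{16}$. Then $u$ is a constant function. -/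
open MeasureTheory Metric Set Real
open scoped RealInnerProductSpace

noncomputable section

/-- The distance from `x` to the axis through the poles of `S³`. -/
def axisDist (x : E4) : ℝ := √(x 0 ^ 2 + x 1 ^ 2 + x 2 ^ 2)

/-- The latitude of `x`, for `x` off the axis through the poles. -/
def latitude (x : E4) : ℝ := arctan (x 3 / axisDist x)

lemma axisDist_sq (x : E4) : axisDist x ^ 2 = x 0 ^ 2 + x 1 ^ 2 + x 2 ^ 2 :=
  sq_sqrt (by positivity)

lemma continuous_axisDist : Continuous axisDist := by
  unfold axisDist
  fun_prop

lemma sum_sq_eq_one {x : E4} (hx : x ∈ S3) : x 0 ^ 2 + x 1 ^ 2 + x 2 ^ 2 + x 3 ^ 2 = 1 := by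
  have h : ‖x‖ = 1 := by simpa [S3] using hx
  have h2 := EuclideanSpace.norm_sq_eq x
  simp only [h, Fin.sum_univ_four, norm_eq_abs, sq_abs] at h2
  linarith

lemma axisDist_smul {c : ℝ} (hc : 0 < c) (x : E4) : axisDist (c • x) = c * axisDist x := by
  rw [← sqrt_sq hc.le, axisDist, axisDist, ← sqrt_mul (sq_nonneg c), sqrt_sq hc.le]
  simp only [PiLp.smul_apply, smul_eq_mul]
  ring_nf

lemma latitude_smul {c : ℝ} (hc : 0 < c) (x : E4) : latitude (c • x) = latitude x := by
  simp only [latitude, axisDist_smul hc, PiLp.smul_apply, smul_eq_mul]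
  rw [mul_div_mul_left _ _ hc.ne']

lemma cos_latitude_pos (x : E4) : 0 < cos (latitude x) := cos_arctan_pos _

lemma ne_zero_of_axisDist_pos {x : E4} (h : 0 < axisDist x) : x ≠ 0 := by
  rintro rfl
  simp [axisDist] at h

/-- The partial derivatives of the latitude. -/
def latitudePartial (i : Fin 4) (x : E4) : ℝ :=
  if i = 3 then axisDist x / (axisDist x ^ 2 + x 3 ^ 2)
  else -(x i * x 3) / (axisDist x * (axisDist x ^ 2 + x 3 ^ 2))

lemma hasFDerivAt_coord (i : Fin 4) (x : E4) :
    HasFDerivAt (fun y : E4 => y i) (EuclideanSpace.proj i : E4 →L[ℝ] ℝ) x :=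
  (EuclideanSpace.proj i : E4 →L[ℝ] ℝ).hasFDerivAt

lemma hasFDerivAt_axisDist {x : E4} (h : 0 < axisDist x) :
    HasFDerivAt axisDist ((axisDist x)⁻¹ • ∑ j : Fin 3,
      x j.castSucc • (EuclideanSpace.proj j.castSucc : E4 →L[ℝ] ℝ)) x := by
  have h0 : x 0 ^ 2 + x 1 ^ 2 + x 2 ^ 2 ≠ 0 := by
    rw [← axisDist_sq]; positivity
  have := ((((hasFDerivAt_coord 0 x).pow 2).add ((hasFDerivAt_coord 1 x).pow 2)).add
    ((hasFDerivAt_coord 2 x).pow 2)).sqrt h0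
  refine this.congr_fderiv ?_
  ext v
  simp [Fin.sum_univ_three, axisDist]
  ring

lemma hasFDerivAt_latitude {x : E4} (h : 0 < axisDist x) :
    HasFDerivAt latitude (∑ i : Fin 4,
      latitudePartial i x • (EuclideanSpace.proj i : E4 →L[ℝ] ℝ)) x := by
  have := ((hasFDerivAt_coord 3 x).mul
    ((hasDerivAt_inv h.ne').comp_hasFDerivAt x (hasFDerivAt_axisDist h))).arctan
  refine this.congr_fderiv ?_
  ext v
  have hR : axisDist x ^ 2 + x 3 ^ 2 ≠ 0 := by positivity
  simp [Fin.sum_univ_three, Fin.sum_univ_four, latitudePartial]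
  field_simp

/-- The pure second partial derivatives of the latitude at a point of `S³`. -/
def latitudePartialTwo (i : Fin 4) (x : E4) : ℝ :=
  if i = 3 then -2 * axisDist x * x 3
  else x 3 * (x i ^ 2 * (1 + 2 * axisDist x ^ 2) - axisDist x ^ 2) / axisDist x ^ 3

lemma hasFDerivAt_latitudePartial (i : Fin 4) {x : E4} (h : 0 < axisDist x)
    (h1 : axisDist x ^ 2 + x 3 ^ 2 = 1) :
    ∃ L : E4 →L[ℝ] ℝ, HasFDerivAt (latitudePartial i) L x ∧
      L (EuclideanSpace.single i 1) = latitudePartialTwo i x := by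
  have hA := hasFDerivAt_axisDist h
  have hR := (hA.pow 2).add ((hasFDerivAt_coord 3 x).pow 2)
  by_cases hi : i = 3
  · subst hi
    refine ⟨_, (hA.mul ((hasDerivAt_inv (by simp [h1])).comp_hasFDerivAt x hR)).congr_of_eventuallyEq
      (.of_forall fun y => by simp [latitudePartial, div_eq_mul_inv]), ?_⟩
    simp [Fin.sum_univ_three, latitudePartialTwo, h1]
    ring
  · refine ⟨_, ((((hasFDerivAt_coord i x).mul (hasFDerivAt_coord 3 x)).neg).mul
      ((hasDerivAt_inv (by simp [h1, h.ne'])).comp_hasFDerivAt x (hA.mul hR))).congr_of_eventuallyEq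
      (.of_forall fun y => by simp [latitudePartial, div_eq_mul_inv, hi]), ?_⟩
    obtain ⟨j, rfl⟩ : ∃ j : Fin 3, i = j.castSucc := by
      revert i; decide
    fin_cases j <;>
    · simp [Fin.sum_univ_three, latitudePartialTwo, h1]
      field_simp
      ring

lemma ext0_eventuallyEq_latitude {w : E4 → ℝ} {k : ℝ → ℝ}
    (hw : ∀ x ∈ S3, 0 < axisDist x → w x = k (latitude x)) {x : E4} (h : 0 < axisDist x) :
    ext0 w =ᶠ[nhds x] fun y => k (latitude y) := by
  filter_upwards [(continuous_axisDist.tendsto x).eventually (lt_mem_nhds h)] with y hy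
  have hy0 := norm_pos_iff.2 (ne_zero_of_axisDist_pos hy)
  have hc := inv_pos.2 hy0
  rw [ext0, hw, latitude_smul hc]
  · simp [S3, norm_smul, hy0.ne']
  · rw [axisDist_smul hc]; positivity

lemma sLap_eq_of_latitude {w : E4 → ℝ} {k k1 k2 : ℝ → ℝ}
    (hw : ∀ x ∈ S3, 0 < axisDist x → w x = k (latitude x))
    (hk : ∀ α ∈ Ioo (-(π / 2)) (π / 2), HasDerivAt k (k1 α) α)
    (hk1 : ∀ α ∈ Ioo (-(π / 2)) (π / 2), HasDerivAt k1 (k2 α) α)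
    {x : E4} (hx : x ∈ S3) (h : 0 < axisDist x) :
    sLap w x = k2 (latitude x) - 2 * tan (latitude x) * k1 (latitude x) := by
  have hlat : ∀ y, latitude y ∈ Ioo (-(π / 2)) (π / 2) := fun y => arctan_mem_Ioo _
  have h1 : axisDist x ^ 2 + x 3 ^ 2 = 1 := by
    rw [axisDist_sq]; exact sum_sq_eq_one hx
  have hfd : ∀ i : Fin 4, (fun y => fderiv ℝ (ext0 w) y (EuclideanSpace.single i 1)) =ᶠ[nhds x]
      fun y => k1 (latitude y) * latitudePartial i y := by
    intro i
    filter_upwards [(continuous_axisDist.tendsto x).eventually (lt_mem_nhds h)] with y hy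
    rw [(ext0_eventuallyEq_latitude hw hy).fderiv_eq,
      HasFDerivAt.fderiv (f := fun y => k (latitude y))
        ((hk _ (hlat y)).comp_hasFDerivAt y (hasFDerivAt_latitude hy))]
    fin_cases i <;> simp [Fin.sum_univ_four]
  have hsec : ∀ i : Fin 4, fderiv ℝ (fun y => fderiv ℝ (ext0 w) y (EuclideanSpace.single i 1)) x
      (EuclideanSpace.single i 1) = k2 (latitude x) * latitudePartial i x ^ 2 +
        k1 (latitude x) * latitudePartialTwo i x := by
    intro i
    obtain ⟨L, hL, hLi⟩ := hasFDerivAt_latitudePartial i h h1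
    rw [(hfd i).fderiv_eq,
      HasFDerivAt.fderiv (f := fun y => k1 (latitude y) * latitudePartial i y)
        (((hk1 _ (hlat x)).comp_hasFDerivAt x (hasFDerivAt_latitude h)).mul hL)]
    fin_cases i <;> simp [Fin.sum_univ_four] at hLi ⊢ <;> rw [hLi] <;> ring
  have htan : tan (latitude x) = x 3 / axisDist x := tan_arctan _
  have hA := axisDist_sq x
  have hgrad : ∑ i, latitudePartial i x ^ 2 = 1 := by
    simp only [Fin.sum_univ_four, latitudePartial, h1]
    simp
    field_simp
    linear_combination (-x 3 ^ 2) * hA + axisDist x ^ 2 * h1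
  have hlap : ∑ i, latitudePartialTwo i x = -2 * (x 3 / axisDist x) := by
    simp only [Fin.sum_univ_four, latitudePartialTwo]
    simp
    field_simp
    linear_combination (-x 3 * (1 + 2 * axisDist x ^ 2)) * hA
  simp only [sLap, hsec]
  rw [Finset.sum_add_distrib, ← Finset.mul_sum, ← Finset.mul_sum, hgrad, hlap, htan]
  ring

lemma sLap_eq_of_latitude_div_cos {w : E4 → ℝ} {p p1 p2 : ℝ → ℝ}
    (hw : ∀ x ∈ S3, 0 < axisDist x → w x = p (latitude x) / cos (latitude x))
    (hp : ∀ α, HasDerivAt p (p1 α) α) (hp1 : ∀ α, HasDerivAt p1 (p2 α) α)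
    {x : E4} (hx : x ∈ S3) (h : 0 < axisDist x) :
    sLap w x = (p2 (latitude x) + p (latitude x)) / cos (latitude x) := by
  have hc := (cos_latitude_pos x).ne'
  rw [sLap_eq_of_latitude (k := fun α => p α / cos α)
    (k1 := fun α => p1 α / cos α + p α * sin α / cos α ^ 2)
    (k2 := fun α => p2 α / cos α + 2 * p1 α * sin α / cos α ^ 2 + p α / cos α
      + 2 * p α * sin α ^ 2 / cos α ^ 3) hw ?_ ?_ hx h]
  · rw [tan_eq_sin_div_cos]
    field_simp
    ring
  · intro α hα
    have hc := (cos_pos_of_mem_Ioo hα).ne'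
    refine ((hp α).div (hasDerivAt_cos α) hc).congr_deriv ?_
    field_simp
    ring
  · intro α hα
    have hc := (cos_pos_of_mem_Ioo hα).ne'
    refine (((hp1 α).div (hasDerivAt_cos α) hc).add (((hp α).mul (hasDerivAt_sin α)).div
      ((hasDerivAt_cos α).pow 2) (pow_ne_zero 2 hc))).congr_deriv ?_
    simp
    field_simp
    ring

/-- The point of latitude `α` on a fixed meridian of `S³`. -/
def meridian (α : ℝ) : E4 := !₂[cos α, 0, 0, sin α]

lemma meridian_mem (α : ℝ) : meridian α ∈ S3 := by
  simp [S3, meridian, EuclideanSpace.norm_eq, Fin.sum_univ_four]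

lemma contDiff_meridian : ContDiff ℝ (⊤ : ℕ∞) meridian := by
  rw [contDiff_euclidean]
  intro i
  fin_cases i
  · exact contDiff_cos
  · exact contDiff_const
  · exact contDiff_const
  · exact contDiff_sin

lemma axisDist_meridian {α : ℝ} (hα : α ∈ Ioo (-(π / 2)) (π / 2)) :
    axisDist (meridian α) = cos α := by
  simp [axisDist, meridian, sqrt_sq (cos_pos_of_mem_Ioo hα).le]

lemma latitude_meridian {α : ℝ} (hα : α ∈ Ioo (-(π / 2)) (π / 2)) :
    latitude (meridian α) = α := by
  rw [latitude, axisDist_meridian hα]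
  simp [meridian, ← tan_eq_sin_div_cos, arctan_tan hα.1 hα.2]

lemma contDiff_comp_meridian {u : E4 → ℝ} (hu : SmoothS3 u) :
    ContDiff ℝ (⊤ : ℕ∞) (fun α => u (meridian α)) := by
  have hn : ∀ α, ‖meridian α‖ = 1 := fun α => by simpa [S3] using meridian_mem α
  have := hu.comp_contDiff contDiff_meridian fun α => by
    simp [← norm_ne_zero_iff, hn]
  have he : (fun α => u (meridian α)) = ext0 u ∘ meridian := by
    ext α
    simp [ext0, hn]
  rwa [he]

lemma hasDerivAt_iteratedDeriv {g : ℝ → ℝ} (hg : ContDiff ℝ (⊤ : ℕ∞) g) (n : ℕ) (α : ℝ) :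
    HasDerivAt (iteratedDeriv n g) (iteratedDeriv (n + 1) g α) α := by
  rw [iteratedDeriv_succ]
  exact ((hg.differentiable_iteratedDeriv n (by exact_mod_cast ENat.natCast_lt_top n)) α).hasDerivAt

lemma sin_latitude {x : E4} (hx : x ∈ S3) (h : 0 < axisDist x) : sin (latitude x) = x 3 := by
  have h1 : axisDist x ^ 2 + x 3 ^ 2 = 1 := by
    rw [axisDist_sq]; exact sum_sq_eq_one hx
  have : 1 + (x 3 / axisDist x) ^ 2 = (1 / axisDist x) ^ 2 := by
    field_simp
    exact h1
  rw [latitude, sin_arctan, this, sqrt_sq (by positivity)]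
  field_simp

/-- The primitive, supplied by the Kazdan–Warner identity, of the equation tested against the
infinitesimal conformal action; `c`, `s` stand for cosine and sine of the latitude, and
`g = c * f`, `g1`, `g2`, `g3` for the derivatives of `g`. -/
def kazdanWarnerPrimitive (ε S c s f g g1 g2 g3 : ℝ) : ℝ :=
  c * g1 * g3 + 3 / 2 * s * g * g3 - 1 / 2 * c * g2 ^ 2 - 1 / 2 * s * g1 * g2 - 3 / 2 * c * g * g2
    + 9 / 4 * c * g1 ^ 2 + 9 / 4 * s * g * g1 - 27 / 32 * c * g ^ 2
    - ε / 6 * (c ^ 3 * f ^ 2) - S / 6 * (c ^ 3 * f⁻¹ ^ 6)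

lemma deriv_eq_zero_of_radial_equation {f : ℝ → ℝ} (hf : ContDiff ℝ (⊤ : ℕ∞) f)
    (hpos : ∀ α, 0 < f α) (hmono : MonotoneOn f (Icc (-(π / 2)) (π / 2)))
    (hN : deriv f (π / 2) = 0) (hS : deriv f (-(π / 2)) = 0) {ε S : ℝ} (hε : 0 < ε)
    (heq : ∀ α ∈ Ioo (-(π / 2)) (π / 2),
      iteratedDeriv 4 (fun α => cos α * f α) α + 5 / 2 * iteratedDeriv 2 (fun α => cos α * f α) α
        + 9 / 16 * (cos α * f α) + ε * (cos α * f α) = -S * (cos α * (f α)⁻¹ ^ 7)) :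
    ∀ α ∈ Ioo (-(π / 2)) (π / 2), deriv f α = 0 := by
  set g : ℝ → ℝ := fun α => cos α * f α with hg_def
  have hg : ContDiff ℝ (⊤ : ℕ∞) g := contDiff_cos.mul hf
  have hfd : ∀ α, HasDerivAt f (deriv f α) α := fun α =>
    ((hf.differentiable (by simp)) α).hasDerivAt
  have hfdd : ∀ α, HasDerivAt (deriv f) (iteratedDeriv 2 f α) α := fun α => by
    simpa [iteratedDeriv_one] using hasDerivAt_iteratedDeriv hf 1 α
  have hd0 : ∀ α, HasDerivAt g (iteratedDeriv 1 g α) α := fun α => by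
    simpa using hasDerivAt_iteratedDeriv hg 0 α
  have hd := hasDerivAt_iteratedDeriv hg
  have hg1 : ∀ α, iteratedDeriv 1 g α = -sin α * f α + cos α * deriv f α := fun α =>
    (hd0 α).unique ((hasDerivAt_cos α).mul (hfd α))
  have hg2 : ∀ α, iteratedDeriv 2 g α =
      -cos α * f α - 2 * sin α * deriv f α + cos α * iteratedDeriv 2 f α := fun α => by
    have h2 : HasDerivAt (iteratedDeriv 1 g) _ α :=
      ((((hasDerivAt_sin α).neg.mul (hfd α)).add
        ((hasDerivAt_cos α).mul (hfdd α)))).congr_of_eventuallyEq (.of_forall hg1)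
    rw [(hd 1 α).unique h2]
    simp
    ring
  set G : ℝ → ℝ := fun α => kazdanWarnerPrimitive ε S (cos α) (sin α) (f α) (g α)
    (iteratedDeriv 1 g α) (iteratedDeriv 2 g α) (iteratedDeriv 3 g α) with hG_def
  have hGd : ∀ α, HasDerivAt G
      ((iteratedDeriv 4 g α + 5 / 2 * iteratedDeriv 2 g α + 9 / 16 * g α)
        * (cos α * iteratedDeriv 1 g α + 3 / 2 * sin α * g α)
        - ε / 6 * (-3 * cos α ^ 2 * sin α * f α ^ 2 + 2 * cos α ^ 3 * f α * deriv f α)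
        + S / 6 * (3 * cos α ^ 2 * sin α * (f α)⁻¹ ^ 6
          + 6 * cos α ^ 3 * (f α)⁻¹ ^ 7 * deriv f α)) α := by
    intro α
    have c := hasDerivAt_cos α
    have s := hasDerivAt_sin α
    have hf0 := (hpos α).ne'
    have t1 := (c.mul (hd 1 α)).mul (hd 3 α)
    have t2 := ((s.const_mul (3 / 2)).mul (hd0 α)).mul (hd 3 α)
    have t3 := (c.const_mul (1 / 2)).mul ((hd 2 α).pow 2)
    have t4 := ((s.const_mul (1 / 2)).mul (hd 1 α)).mul (hd 2 α)
    have t5 := ((c.const_mul (3 / 2)).mul (hd0 α)).mul (hd 2 α)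
    have t6 := (c.const_mul (9 / 4)).mul ((hd 1 α).pow 2)
    have t7 := ((s.const_mul (9 / 4)).mul (hd0 α)).mul (hd 1 α)
    have t8 := (c.const_mul (27 / 32)).mul ((hd0 α).pow 2)
    have t9 := ((c.pow 3).mul ((hfd α).pow 2)).const_mul (ε / 6)
    have t10 := ((c.pow 3).mul (((hfd α).inv hf0).pow 6)).const_mul (S / 6)
    have := ((((((((t1.add t2).sub t3).sub t4).sub t5).add t6).add t7).sub t8).sub t9).sub t10
    refine HasDerivAt.congr_deriv (f := G) this ?_
    simp
    field_simp
    ring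
  have hGd' : ∀ α ∈ Ioo (-(π / 2)) (π / 2),
      HasDerivAt G (-(4 / 3) * ε * (cos α ^ 3 * f α * deriv f α)) α := by
    intro α hα
    refine (hGd α).congr_deriv ?_
    have hL : iteratedDeriv 4 g α + 5 / 2 * iteratedDeriv 2 g α + 9 / 16 * g α =
        -S * (cos α * (f α)⁻¹ ^ 7) - ε * (cos α * f α) := by
      linarith [heq α hα]
    rw [hL, hg1]
    have hf0 := (hpos α).ne'
    simp only [hg_def]
    field_simp
    ring
  have hfnn : ∀ α ∈ Ioo (-(π / 2)) (π / 2), 0 ≤ deriv f α := by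
    intro α hα
    rw [← derivWithin_of_mem_nhds (Icc_mem_nhds hα.1 hα.2)]
    exact hmono.derivWithin_nonneg
  have hanti : AntitoneOn G (Icc (-(π / 2)) (π / 2)) := by
    refine antitoneOn_of_deriv_nonpos (convex_Icc _ _)
      (fun α _ => (hGd α).continuousAt.continuousWithinAt)
      (fun α _ => (hGd α).differentiableAt.differentiableWithinAt) fun α hα => ?_
    rw [interior_Icc] at hα
    rw [(hGd' α hα).deriv]
    have h1 := cos_pos_of_mem_Ioo hα
    have h2 := hfnn α hα
    have h3 := hpos α
    have : 0 ≤ ε * (cos α ^ 3 * f α * deriv f α) := by positivity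
    linarith
  have hGN : G (π / 2) = 0 := by
    simp only [hG_def, kazdanWarnerPrimitive, hg2, hN]
    simp [hg_def]
  have hGS : G (-(π / 2)) = 0 := by
    simp only [hG_def, kazdanWarnerPrimitive, hg2, hS]
    simp [hg_def]
  have hG0 : ∀ α ∈ Icc (-(π / 2)) (π / 2), G α = 0 := by
    intro α hα
    have hle : -(π / 2) ≤ π / 2 := hα.1.trans hα.2
    have h1 := hanti (left_mem_Icc.2 hle) hα hα.1
    have h2 := hanti hα (right_mem_Icc.2 hle) hα.2
    linarith
  intro α hα
  have hzero : HasDerivAt G 0 α :=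
    (hasDerivAt_const α (0 : ℝ)).congr_of_eventuallyEq <| by
      filter_upwards [Icc_mem_nhds hα.1 hα.2] with β hβ using hG0 β hβ
  have h := (hGd' α hα).unique hzero
  have h1 := cos_pos_of_mem_Ioo hα
  have h3 := hpos α
  simpa [hε.ne', h1.ne', h3.ne'] using h

/-- If `u > 0` is smooth on `S³`, radial symmetric and decreasing with respect to the
north pole `N = (0,0,0,1)`, and solves `Pu + εu = -s_ε u⁻⁷` with `ε, s_ε > 0`, then `u`
is constant. -/
theorem stmt_18 (u : E4 → ℝ) (hu : SmoothS3 u) (hpos : ∀ x ∈ S3, 0 < u x)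
    (hrad : ∃ φ : ℝ → ℝ, MonotoneOn φ (Icc (-1 : ℝ) 1) ∧
      ∀ x ∈ S3, u x = φ ⟪x, (EuclideanSpace.single 3 1 : E4)⟫)
    (ε s : ℝ) (hε : 0 < ε) (hs : 0 < s)
    (heq : ∀ x ∈ S3, Pan u x + ε * u x = -s * ((u x)⁻¹) ^ 7) :
    ∀ x ∈ S3, ∀ y ∈ S3, u x = u y := by
  obtain ⟨φ, hφ, hrad⟩ := hrad
  have hcoord : ∀ x : E4, ⟪x, (EuclideanSpace.single 3 1 : E4)⟫ = x 3 := fun x => by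
    simp [EuclideanSpace.inner_single_right]
  simp only [hcoord] at hrad
  set f : ℝ → ℝ := fun α => u (meridian α) with hf_def
  have hfφ : ∀ α, f α = φ (sin α) := fun α => by
    simp only [hf_def, hrad _ (meridian_mem α)]
    simp [meridian]
  have hf : ContDiff ℝ (⊤ : ℕ∞) f := contDiff_comp_meridian hu
  have hfpos : ∀ α, 0 < f α := fun α => hpos _ (meridian_mem α)
  have hmono : MonotoneOn f (Icc (-(π / 2)) (π / 2)) := by
    intro a ha b hb hab
    rw [hfφ, hfφ]
    exact hφ (sin_mem_Icc a) (sin_mem_Icc b) (strictMonoOn_sin.monotoneOn ha hb hab)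
  have hcrit : ∀ a : ℝ, (∀ α, f (2 * a - α) = f α) → deriv f a = 0 := by
    intro a ha
    have h1 := deriv_comp_const_sub (f := f) (2 * a) a
    simp only [ha] at h1
    ring_nf at h1
    linarith
  have hN : deriv f (π / 2) = 0 := hcrit _ fun α => by
    rw [hfφ, hfφ, show 2 * (π / 2) - α = π - α by ring, sin_pi_sub]
  have hS : deriv f (-(π / 2)) = 0 := hcrit _ fun α => by
    rw [hfφ, hfφ, show 2 * (-(π / 2)) - α = -(α + π) by ring, sin_neg, sin_add_pi, neg_neg]
  set g : ℝ → ℝ := fun α => cos α * f α with hg_def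
  have hg : ContDiff ℝ (⊤ : ℕ∞) g := contDiff_cos.mul hf
  have hd := hasDerivAt_iteratedDeriv hg
  have hd0 : ∀ α, HasDerivAt g (iteratedDeriv 1 g α) α := fun α => by
    simpa using hd 0 α
  have hu_lat : ∀ x ∈ S3, 0 < axisDist x → u x = g (latitude x) / cos (latitude x) := by
    intro x hx h
    have hc := (cos_latitude_pos x).ne'
    rw [hg_def]
    simp only
    rw [mul_div_cancel_left₀ _ hc, hfφ, sin_latitude hx h, hrad x hx]
  have hL1 : ∀ x ∈ S3, 0 < axisDist x →
      sLap u x = (iteratedDeriv 2 g (latitude x) + g (latitude x)) / cos (latitude x) :=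
    fun x hx h => sLap_eq_of_latitude_div_cos hu_lat hd0 (hd 1) hx h
  have hL2 : ∀ x ∈ S3, 0 < axisDist x → sLap (sLap u) x =
      (iteratedDeriv 4 g (latitude x) + iteratedDeriv 2 g (latitude x) +
        (iteratedDeriv 2 g (latitude x) + g (latitude x))) / cos (latitude x) :=
    fun x hx h => sLap_eq_of_latitude_div_cos
      (p := fun α => iteratedDeriv 2 g α + g α)
      (p1 := fun α => iteratedDeriv 3 g α + iteratedDeriv 1 g α)
      (p2 := fun α => iteratedDeriv 4 g α + iteratedDeriv 2 g α) hL1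
      (fun α => (hd 2 α).add (hd0 α)) (fun α => (hd 3 α).add (hd 1 α)) hx h
  have hzero := deriv_eq_zero_of_radial_equation hf hfpos hmono hN hS (S := s) hε (by
    intro α hα
    have hc := cos_pos_of_mem_Ioo hα
    have hA : 0 < axisDist (meridian α) := by rwa [axisDist_meridian hα]
    have h := heq _ (meridian_mem α)
    rw [Pan, hL2 _ (meridian_mem α) hA, hL1 _ (meridian_mem α) hA, latitude_meridian hα,
      show u (meridian α) = f α from rfl] at h
    rw [show -s * (cos α * (f α)⁻¹ ^ 7) = cos α * (-s * (f α)⁻¹ ^ 7) by ring, ← h]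
    simp only [hg_def]
    field_simp
    ring)
  have hconst : ∀ α ∈ Icc (-(π / 2)) (π / 2), f α = f (-(π / 2)) :=
    constant_of_derivWithin_zero (fun α _ => (hf.differentiable (by simp) α).differentiableWithinAt)
      fun α hα => by
        rw [(hf.differentiable (by simp) α).derivWithin
          (uniqueDiffOn_Icc (by linarith [pi_pos]) α (Ico_subset_Icc_self hα))]
        rcases hα.1.eq_or_lt with h | h
        · rw [← h, hS]
        · exact hzero α ⟨h, hα.2⟩
  have hux : ∀ x ∈ S3, u x = f (-(π / 2)) := by
    intro x hx
    have h1 := sum_sq_eq_one hx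
    have h2 : -1 ≤ x 3 ∧ x 3 ≤ 1 := by
      constructor <;> nlinarith [sq_nonneg (x 0), sq_nonneg (x 1), sq_nonneg (x 2)]
    rw [← hconst _ (arcsin_mem_Icc (x 3)), hfφ, sin_arcsin h2.1 h2.2, hrad x hx]
  intro x hx y hy
  rw [hux x hx, hux y hy]
end
end
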